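/- arXiv:1309.7419 — 4 statements merged into one kernel-verified Lean document; each statement's English description precedes it below -/
import Mathlib

section
/- Let f be a solution of the damped transport equation on [0,T) × ℝ^d with speed c > 0, direction Ω and continuous absorption coefficient K ≥ 0. If f(0, x) = 0 whenever x · Ω ≤ 0, then for every t ∈ [0,T), f(t, x) = 0 whenever x · Ω ≤ 0. -/
/-! The characteristic through `(t, x)` is `s ↦ (s, x + c(s - t)Ω)`. Along it a solution `f` restricts to
a function `g` with `g' = -c K g`, so `(g²)' = -2 c K g² ≤ 0` and `g²` decreases on `[0, t]`. Its foot
`x - ctΩ` lies in the half-space `x·Ω ≤ 0` whenever `x` does, hence `g(0) = 0`, and `g² ≥ 0` forces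
`g(t) = f(t, x) = 0`. -/

open Set MeasureTheory
open scoped RealInnerProductSpace

/-- Directional invariance for the damped transport equation
`(1/c) ∂ₜ f + Ω · ∇ₓ f = −K f` on `[0,T) × ℝ^d`: if `f(0,x) = 0` on the
half-space `x·Ω ≤ 0`, then `f(t,x) = 0` there for all `t ∈ [0,T)`. -/
theorem transport_halfspace_invariance (d : ℕ) (hd : 1 ≤ d) (c T : ℝ)
    (hc : 0 < c) (hT : 0 < T)
    (Ω : EuclideanSpace ℝ (Fin d)) (hΩ : ‖Ω‖ = 1)
    (f K : ℝ × EuclideanSpace ℝ (Fin d) → ℝ)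
    (hf : ContDiffOn ℝ 1 f (Ico 0 T ×ˢ univ))
    (hK : ContinuousOn K (Ico 0 T ×ˢ univ))
    (hK0 : ∀ p ∈ Ico (0:ℝ) T ×ˢ (univ : Set (EuclideanSpace ℝ (Fin d))), 0 ≤ K p)
    (hpde : ∀ p ∈ Ico (0:ℝ) T ×ˢ (univ : Set (EuclideanSpace ℝ (Fin d))),
      (1 / c) * fderivWithin ℝ f (Ico 0 T ×ˢ univ) p (1, 0)
        + fderivWithin ℝ f (Ico 0 T ×ˢ univ) p (0, Ω) = -(K p * f p))
    (h0 : ∀ x : EuclideanSpace ℝ (Fin d), ⟪x, Ω⟫ ≤ 0 → f (0, x) = 0) :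
    ∀ t ∈ Ico (0:ℝ) T, ∀ x : EuclideanSpace ℝ (Fin d),
      ⟪x, Ω⟫ ≤ 0 → f (t, x) = 0 := by
  intro t ht x hx
  have hderiv : ∀ s ∈ Ico (0:ℝ) T,
      HasDerivWithinAt (fun s : ℝ => f (s, x + (c * (s - t)) • Ω))
        (-(c * K (s, x + (c * (s - t)) • Ω) * f (s, x + (c * (s - t)) • Ω))) (Ico 0 T) s := by
    intro s hs
    have hmem : (s, x + (c * (s - t)) • Ω) ∈
        Ico (0:ℝ) T ×ˢ (univ : Set (EuclideanSpace ℝ (Fin d))) := ⟨hs, mem_univ _⟩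
    have hγ : HasDerivWithinAt (fun s : ℝ => (s, x + (c * (s - t)) • Ω)) (1, c • Ω) (Ico 0 T) s := by
      refine (hasDerivWithinAt_id s _).prodMk ?_
      have h := ((((hasDerivWithinAt_id s (Ico 0 T)).sub_const t).const_mul c).smul_const
        Ω).const_add x
      simpa using h
    have hmaps : MapsTo (fun s : ℝ => (s, x + (c * (s - t)) • Ω)) (Ico 0 T)
        (Ico (0:ℝ) T ×ˢ (univ : Set (EuclideanSpace ℝ (Fin d)))) :=
      fun r hr => ⟨hr, mem_univ _⟩
    have hmain := (hf.differentiableOn one_ne_zero _ hmem).hasFDerivWithinAt.comp_hasDerivWithinAt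
      s hγ hmaps
    refine hmain.congr_deriv ?_
    have hsplit : ((1 : ℝ), c • Ω) = (1, 0) + c • ((0 : ℝ), Ω) := by simp
    have hp := hpde _ hmem
    rw [hsplit, map_add, map_smul, smul_eq_mul]
    field_simp at hp
    linarith
  have hsub : Icc 0 t ⊆ Ico 0 T := fun s hs => ⟨hs.1, hs.2.trans_lt ht.2⟩
  have hanti : AntitoneOn (fun s : ℝ => f (s, x + (c * (s - t)) • Ω) ^ 2) (Icc 0 t) := by
    refine antitoneOn_of_hasDerivWithinAt_nonpos (convex_Icc 0 t)
      (fun s hs => (((hderiv s (hsub hs)).pow 2).continuousWithinAt).mono hsub)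
      (fun s hs => ((hderiv s (hsub (interior_subset hs))).pow 2).mono
        (interior_subset.trans hsub)) ?_
    intro s hs
    have hk := hK0 (s, x + (c * (s - t)) • Ω) ⟨hsub (interior_subset hs), mem_univ _⟩
    have := mul_nonneg (mul_nonneg hc.le hk) (sq_nonneg (f (s, x + (c * (s - t)) • Ω)))
    norm_num
    nlinarith
  have hfoot : f (0, x + (c * (0 - t)) • Ω) = 0 := by
    apply h0
    rw [inner_add_left, real_inner_smul_left, real_inner_self_eq_norm_sq, hΩ]
    nlinarith [mul_nonneg hc.le ht.1]
  have hle := hanti (left_mem_Icc.2 ht.1) (right_mem_Icc.2 ht.1) ht.1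
  simp only [hfoot, sub_self, mul_zero, zero_smul, add_zero] at hle
  exact pow_eq_zero_iff two_ne_zero |>.1 (le_antisymm (by simpa using hle) (sq_nonneg _))
end

section
/- Let d ≥ 1 be an integer, γ > 1, κ ≥ 1, T > 0. Suppose I_r, D, P_m, Q_r : [0,T) → ℝ are functions with D(t) ≥ 0, P_m(t) ≥ 0 and Q_r(t) ≥ 0 for all t, I_r differentiable, and for all t ∈ [0,T): I_r(t) = D(t) + (2/(γ−1))(t+κ)² P_m(t) + (t+κ) Q_r(t), and I_r′(t) = (2(2 − d(γ−1))/(γ−1)) (t+κ) P_m(t) + Q_r(t). Then for all t ∈ [0,T): if 1 < γ ≤ 1 + 1/d, then P_m(t) ≤ ((γ−1)/(2 κ^{2−d(γ−1)})) (t+κ)^{−d(γ−1)} I_r(0); and if γ > 1 + 1/d, then P_m(t) ≤ ((γ−1)/2) (κ(t+κ))^{−1} I_r(0). -/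
/-!
Write `s = t + κ` and `a = d (γ - 1)`, and let `E = 2 / (γ - 1) * s ^ 2 * Pm` be the material
pressure part of `Ir = D + E + s * Qr`. The derivative identity says `s * Ir' = (2 - a) * E + s * Qr`,
so nonnegativity of `D`, `E`, `Qr` gives `s * Ir' ≤ b * Ir` as soon as `b ≥ 1` and `b ≥ 2 - a`.
Hence `Ir * s ^ (-b)` is nonincreasing (`growth_of_mul_deriv_le`), that is
`Ir t ≤ Ir 0 * (s / κ) ^ b`, and `E ≤ Ir` turns this into a bound on `Pm`.
The two regimes are the two values of `max 1 (2 - a)`: `b = 2 - a` if `a ≤ 1`, and `b = 1` if `a > 1`.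
-/

open Set

/-- Grönwall inequality of Euler type: `(t + κ) f' ≤ b f` forces `f` to grow at most like
`(t + κ) ^ b`. -/
lemma growth_of_mul_deriv_le {κ T b : ℝ} (hκ : 0 < κ) {f f' : ℝ → ℝ}
    (hf : ∀ t ∈ Ico (0:ℝ) T, HasDerivWithinAt f (f' t) (Ico 0 T) t)
    (hle : ∀ t ∈ Ico (0:ℝ) T, (t + κ) * f' t ≤ b * f t) :
    ∀ t ∈ Ico (0:ℝ) T, f t * (t + κ) ^ (-b) ≤ f 0 * κ ^ (-b) := by
  have hg : ∀ t ∈ Ico (0:ℝ) T, HasDerivWithinAt (fun t => f t * (t + κ) ^ (-b))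
      (f' t * (t + κ) ^ (-b) + f t * (1 * (-b) * (t + κ) ^ (-b - 1))) (Ico 0 T) t := by
    intro t ht
    have hs : 0 < t + κ := by linarith [ht.1]
    exact (hf t ht).mul
      (((hasDerivAt_id t).add_const κ).rpow_const (Or.inl hs.ne')).hasDerivWithinAt
  have hanti : AntitoneOn (fun t => f t * (t + κ) ^ (-b)) (Ico 0 T) := by
    refine antitoneOn_of_hasDerivWithinAt_nonpos (convex_Ico 0 T)
      (fun t ht => (hg t ht).continuousWithinAt)
      (fun t ht => (hg t (interior_subset ht)).mono interior_subset) ?_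
    intro t ht
    have ht' := interior_subset ht
    have hs : 0 < t + κ := by linarith [ht'.1]
    have hpow : (t + κ) ^ (-b) = (t + κ) ^ (-b - 1) * (t + κ) := by
      rw [← Real.rpow_add_one hs.ne']; congr 1; ring
    rw [hpow]
    have := mul_nonneg (Real.rpow_pos_of_pos hs (-b - 1)).le (sub_nonneg.2 (hle t ht'))
    nlinarith [this]
  intro t ht
  have := hanti ⟨le_rfl, ht.1.trans_lt ht.2⟩ ht ht.1
  simpa using this

/-- Behavior of the total material pressure (Proposition 2.1): decay of
`P_m(t)` from the decomposition and differential identity of the blow-up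
functional `I_r(t)`. -/
theorem material_pressure_decay (d : ℕ) (hd : 1 ≤ d) (γ κ T : ℝ)
    (hγ : 1 < γ) (hκ : 1 ≤ κ) (hT : 0 < T)
    (Ir D Pm Qr : ℝ → ℝ)
    (hD : ∀ t ∈ Ico (0:ℝ) T, 0 ≤ D t)
    (hPm : ∀ t ∈ Ico (0:ℝ) T, 0 ≤ Pm t)
    (hQr : ∀ t ∈ Ico (0:ℝ) T, 0 ≤ Qr t)
    (hdecomp : ∀ t ∈ Ico (0:ℝ) T,
      Ir t = D t + (2 / (γ - 1)) * (t + κ) ^ 2 * Pm t + (t + κ) * Qr t)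
    (hderiv : ∀ t ∈ Ico (0:ℝ) T, HasDerivWithinAt Ir
      ((2 * (2 - (d : ℝ) * (γ - 1)) / (γ - 1)) * (t + κ) * Pm t + Qr t)
      (Ico 0 T) t) :
    ∀ t ∈ Ico (0:ℝ) T,
      (γ ≤ 1 + 1 / (d : ℝ) →
        Pm t ≤ ((γ - 1) / (2 * κ ^ (2 - (d : ℝ) * (γ - 1))))
          * (t + κ) ^ (-((d : ℝ) * (γ - 1))) * Ir 0) ∧
      (1 + 1 / (d : ℝ) < γ →
        Pm t ≤ ((γ - 1) / 2) * (κ * (t + κ))⁻¹ * Ir 0) := by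
  have hγ' : 0 < γ - 1 := by linarith
  have hκ' : 0 < κ := by linarith
  have hd' : (0:ℝ) < d := by exact_mod_cast hd
  set a : ℝ := (d : ℝ) * (γ - 1) with ha
  have hE : ∀ t ∈ Ico (0:ℝ) T, 0 ≤ 2 / (γ - 1) * (t + κ) ^ 2 * Pm t := fun t ht =>
    mul_nonneg (by positivity) (hPm t ht)
  have key : ∀ b : ℝ, 1 ≤ b → 2 - a ≤ b → ∀ t ∈ Ico (0:ℝ) T,
      Pm t ≤ (γ - 1) / 2 * ((t + κ) ^ (b - 2) * κ ^ (-b)) * Ir 0 := by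
    intro b hb1 hb2 t ht
    have hgrow := growth_of_mul_deriv_le (b := b) hκ' hderiv (by
      intro t ht
      have hs : 0 < t + κ := by linarith [ht.1]
      have hsQ := mul_nonneg hs.le (hQr t ht)
      have h1 := mul_nonneg (sub_nonneg.2 hb2) (hE t ht)
      have h2 := mul_nonneg (sub_nonneg.2 hb1) hsQ
      have h3 := mul_nonneg (by linarith : 0 ≤ b) (hD t ht)
      have heq : (t + κ) * (2 * (2 - a) / (γ - 1) * (t + κ) * Pm t + Qr t)
          = (2 - a) * (2 / (γ - 1) * (t + κ) ^ 2 * Pm t) + (t + κ) * Qr t := by ring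
      rw [heq, hdecomp t ht]
      linarith) t ht
    have hs : 0 < t + κ := by linarith [ht.1]
    have hEI : 2 / (γ - 1) * (t + κ) ^ 2 * Pm t ≤ Ir t := by
      rw [hdecomp t ht]
      linarith [hD t ht, mul_nonneg hs.le (hQr t ht)]
    have hp : 0 < (t + κ) ^ (b - 2) := Real.rpow_pos_of_pos hs _
    have hcancel : (t + κ) ^ (b - 2) * (t + κ) ^ (-b) * (t + κ) ^ 2 = 1 := by
      rw [← Real.rpow_natCast (t + κ) 2, ← Real.rpow_add hs, ← Real.rpow_add hs,
        show b - 2 + -b + ((2:ℕ) : ℝ) = 0 by push_cast; ring, Real.rpow_zero]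
    have hq : 0 < (t + κ) ^ (-b) := Real.rpow_pos_of_pos hs _
    calc Pm t = (γ - 1) / 2 * ((t + κ) ^ (b - 2) * ((t + κ) ^ (-b) *
          (2 / (γ - 1) * (t + κ) ^ 2 * Pm t))) := by
          have : (γ - 1) / 2 * ((t + κ) ^ (b - 2) * ((t + κ) ^ (-b) *
            (2 / (γ - 1) * (t + κ) ^ 2 * Pm t))) = ((γ - 1) / 2 * (2 / (γ - 1))) *
            ((t + κ) ^ (b - 2) * (t + κ) ^ (-b) * (t + κ) ^ 2) * Pm t := by ring
          rw [this, hcancel]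
          field_simp
      _ ≤ (γ - 1) / 2 * ((t + κ) ^ (b - 2) * ((t + κ) ^ (-b) * Ir t)) := by gcongr
      _ ≤ (γ - 1) / 2 * ((t + κ) ^ (b - 2) * (Ir 0 * κ ^ (-b))) := by
          rw [mul_comm ((t + κ) ^ (-b))]
          gcongr
      _ = _ := by ring
  intro t ht
  have hs : 0 < t + κ := by linarith [ht.1]
  constructor
  · intro h
    have ha1 : a ≤ 1 := by
      have := mul_le_mul_of_nonneg_left (sub_le_iff_le_add'.2 h) hd'.le
      rwa [mul_one_div_cancel hd'.ne'] at this
    refine (key (2 - a) (by linarith) le_rfl t ht).trans_eq ?_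
    rw [show 2 - a - 2 = -a by ring, Real.rpow_neg hκ'.le]
    have := (Real.rpow_pos_of_pos hκ' (2 - a)).ne'
    field_simp
  · intro h
    have ha1 : 1 < a := by
      have := mul_lt_mul_of_pos_left (lt_sub_iff_add_lt'.2 h) hd'
      rwa [mul_one_div_cancel hd'.ne'] at this
    refine (key 1 le_rfl (by linarith) t ht).trans_eq ?_
    rw [show (1:ℝ) - 2 = -1 by norm_num, Real.rpow_neg_one, Real.rpow_neg_one, mul_inv,
      mul_comm κ⁻¹]
end

section
/- Let d ≥ 1 be an integer, γ > 1, α ∈ [0,1), κ ≥ 1, L > 0, m₀ > 0, S̲ ∈ ℝ, J₀ > 0, T > 0, and let ω_d denote the Lebesgue measure of the unit ball of ℝ^d. Suppose that for each t ∈ [0,T): (i) ρ(t,·) : ℝ^d → [0,∞) is Lebesgue measurable with ∫_{ℝ^d} ρ(t,x) dx = m₀, and the set {x : ρ(t,x) > 0} has Lebesgue measure at most ω_d L^d (t+κ)^{dα}; (ii) P_m(t) ≥ e^{S̲} ∫_{ℝ^d} ρ(t,x)^γ dx; (iii) if 1 < γ ≤ 1 + 1/d then P_m(t) ≤ ((γ−1)/(2κ^{2−d(γ−1)}))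 (t+κ)^{−d(γ−1)} J₀, while if γ > 1 + 1/d then P_m(t) ≤ ((γ−1)/(2κ)) (t+κ)^{−1} J₀. Then: if 1 < γ ≤ 1 + 1/d, T ≤ (J₀/L₁)^{1/(d(γ−1)(1−α))}, where L₁ = (2κ^{2−d(γ−1)}/(γ−1)) e^{S̲} L^{(1−γ)d} ω_d^{1−γ} m₀^γ; and if γ > 1 + 1/d and dα(γ−1) < 1, then T ≤ (J₀/L₂)^{1/(1−dα(γ−1))}, where L₂ = (2κ/(γ−1)) e^{S̲} L^{(1−γ)d} ω_d^{1−γ} m₀^γ. -/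
/-!
Among densities of mass `m` carried by a set of measure at most `V`, the integral of `ρ ^ γ` is
at least `m ^ γ * V ^ (1 - γ)` (`mass_rpow_le_integral_rpow`, Jensen's inequality). Hence the
pressure is bounded below by a constant times `(t + κ) ^ (-d α (γ - 1))`, whereas it decays at
least like `(t + κ) ^ (-b)` with `b = d (γ - 1)` or `b = 1`. Since `α < 1` (respectively
`d α (γ - 1) < 1`), the lower bound decays strictly more slowly than the upper one, so the two are
compatible only for times up to an explicit value (`time_le_of_power_bounds`).
-/

open Set MeasureTheory

/-- Jensen's inequality for `s ↦ s ^ γ` on the support of `f`, in integrated form: it is obtained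
by integrating the tangent line inequality at `c = m / V`. Since the tangent line
is only used where `f > 0`, an upper bound `V` for the measure of the support is enough. -/
theorem mass_rpow_le_integral_rpow {X : Type*} [MeasurableSpace X] {μ : Measure X} {f : X → ℝ}
    {γ m V : ℝ} (hγ : 1 < γ) (hm : 0 < m) (hV : 0 < V) (hf0 : ∀ x, 0 ≤ f x)
    (hfm : Measurable f) (hfi : Integrable f μ) (hmass : ∫ x, f x ∂μ = m)
    (hfγ : Integrable (fun x => f x ^ γ) μ) (hS : μ {x | 0 < f x} ≤ ENNReal.ofReal V) :
    m ^ γ * V ^ (1 - γ) ≤ ∫ x, f x ^ γ ∂μ := by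
  set S : Set X := {x | 0 < f x} with hSdef
  have hSm : MeasurableSet S := measurableSet_lt measurable_const hfm
  obtain ⟨c, hc⟩ : ∃ c, c = m / V := ⟨_, rfl⟩
  have hc0 : 0 < c := hc ▸ div_pos hm hV
  have hcγ : c ^ γ = c ^ (γ - 1) * c := by
    rw [← Real.rpow_add_one hc0.ne', sub_add_cancel]
  have hpt : ∀ x, γ * c ^ (γ - 1) * f x - S.indicator (fun _ => (γ - 1) * c ^ γ) x
      ≤ f x ^ γ := by
    intro x
    by_cases hx : 0 < f x
    · rw [indicator_of_mem (show x ∈ S from hx)]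
      have h1 : -1 ≤ f x / c - 1 := by
        have := div_nonneg (hf0 x) hc0.le
        linarith
      -- Bernoulli's inequality at `f x / c`, rescaled, is the tangent line inequality at `c`.
      have h2 := one_add_mul_self_le_rpow_one_add h1 hγ.le
      rw [add_sub_cancel, Real.div_rpow (hf0 x) hc0.le,
        le_div_iff₀ (Real.rpow_pos_of_pos hc0 γ)] at h2
      refine le_trans (le_of_eq ?_) h2
      rw [hcγ]
      field_simp
      ring
    · have h0 : f x = 0 := le_antisymm (not_lt.mp hx) (hf0 x)
      rw [indicator_of_notMem (show x ∉ S from hx), h0,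
        Real.zero_rpow (by linarith : γ ≠ 0)]
      simp
  have hSfin : μ S ≠ ⊤ := ne_top_of_le_ne_top ENNReal.ofReal_ne_top hS
  have hI : Integrable (S.indicator (fun _ => (γ - 1) * c ^ γ)) μ :=
    (integrable_indicator_iff hSm).2 (integrableOn_const hSfin)
  have hSV : μ.real S ≤ V := ENNReal.toReal_le_of_le_ofReal hV.le hS
  have h := integral_mono ((hfi.const_mul (γ * c ^ (γ - 1))).sub hI) hfγ hpt
  simp only [Pi.sub_apply] at h
  rw [integral_sub (hfi.const_mul _) hI, integral_const_mul, hmass,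
    integral_indicator_const _ hSm, smul_eq_mul] at h
  have h3 : μ.real S * ((γ - 1) * c ^ γ) ≤ V * ((γ - 1) * c ^ γ) :=
    mul_le_mul_of_nonneg_right hSV
      (mul_nonneg (by linarith) (Real.rpow_nonneg hc0.le _))
  have h4 : m ^ γ * V ^ (1 - γ) = c ^ (γ - 1) * m := by
    rw [hc, Real.div_rpow hm.le hV.le, show 1 - γ = -(γ - 1) by ring, Real.rpow_neg hV.le,
      Real.rpow_sub_one hm.ne']
    field_simp
  have h5 : V * ((γ - 1) * c ^ γ) = (γ - 1) * c ^ (γ - 1) * m := by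
    rw [hcγ, show V * ((γ - 1) * (c ^ (γ - 1) * c)) = (γ - 1) * c ^ (γ - 1) * (c * V) by ring,
      hc, div_mul_cancel₀ _ hV.ne']
  rw [h4]
  linarith

/-- A quantity squeezed on `[0, T)` between `A * (t + κ) ^ p` and `D⁻¹ * (t + κ) ^ (-b) * J`, with
the upper bound decaying strictly faster, yields an explicit upper bound for `T`. -/
theorem time_le_of_power_bounds {A D J κ T p b : ℝ} (hA : 0 < A) (hD : 0 < D)
    (hκ : 0 < κ) (hT : 0 < T) (hbp : 0 < b + p)
    (h : ∀ t ∈ Ico (0 : ℝ) T, A * (t + κ) ^ p ≤ D⁻¹ * (t + κ) ^ (-b) * J) :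
    T ≤ (J / (D * A)) ^ (1 / (b + p)) := by
  refine le_of_forall_lt_imp_le_of_dense fun t htT => ?_
  -- Negative times are covered by the bound at time `0`.
  refine (le_max_left t 0).trans ?_
  have hs0 : 0 ≤ max t 0 := le_max_right _ _
  have hs := h (max t 0) ⟨hs0, max_lt htT hT⟩
  generalize max t 0 = s at hs hs0 ⊢
  have hx : 0 < s + κ := by linarith
  have hxb := Real.rpow_pos_of_pos hx b
  have h1 : (s + κ) ^ (b + p) ≤ J / (D * A) := by
    rw [le_div_iff₀ (mul_pos hD hA), Real.rpow_add hx]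
    rw [Real.rpow_neg hx.le] at hs
    have h2 := mul_le_mul_of_nonneg_left hs (mul_pos hD hxb).le
    have h3 : D * (s + κ) ^ b * (D⁻¹ * ((s + κ) ^ b)⁻¹ * J) = J := by
      field_simp
    rw [h3] at h2
    linarith
  have h4 := Real.rpow_le_rpow (Real.rpow_nonneg hx.le _) h1 (one_div_pos.2 hbp).le
  rw [← Real.rpow_mul hx.le, mul_one_div_cancel hbp.ne', Real.rpow_one] at h4
  linarith

/-- Life span estimate of Theorem 2.1: if the total mass is conserved, the
support of the density grows sub-linearly, the total material pressure is
bounded below via the entropy bound and Jensen's inequality and decays as in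
Proposition 2.1, then the time `T` is explicitly bounded. -/
theorem life_span_estimate (d : ℕ) (hd : 1 ≤ d) (γ α κ L m₀ Slb J₀ T : ℝ)
    (hγ : 1 < γ) (hα : α ∈ Ico (0:ℝ) 1) (hκ : 1 ≤ κ) (hL : 0 < L)
    (hm₀ : 0 < m₀) (hJ₀ : 0 < J₀) (hT : 0 < T)
    (ρ : ℝ → EuclideanSpace ℝ (Fin d) → ℝ) (Pm : ℝ → ℝ)
    (ωd : ℝ) (hωd : ωd = (volume (Metric.ball (0 : EuclideanSpace ℝ (Fin d)) 1)).toReal)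
    (hρ0 : ∀ t ∈ Ico (0:ℝ) T, ∀ x, 0 ≤ ρ t x)
    (hρmeas : ∀ t ∈ Ico (0:ℝ) T, Measurable (ρ t))
    (hρint : ∀ t ∈ Ico (0:ℝ) T, Integrable (ρ t))
    (hmass : ∀ t ∈ Ico (0:ℝ) T, ∫ x, ρ t x = m₀)
    (hργint : ∀ t ∈ Ico (0:ℝ) T, Integrable (fun x => ρ t x ^ γ))
    (hsupp : ∀ t ∈ Ico (0:ℝ) T,
      volume {x | 0 < ρ t x} ≤ ENNReal.ofReal (ωd * L ^ d * (t + κ) ^ ((d : ℝ) * α)))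
    (hPm_lb : ∀ t ∈ Ico (0:ℝ) T, Real.exp Slb * ∫ x, ρ t x ^ γ ≤ Pm t)
    (hPm_ub₁ : γ ≤ 1 + 1 / (d : ℝ) → ∀ t ∈ Ico (0:ℝ) T,
      Pm t ≤ ((γ - 1) / (2 * κ ^ (2 - (d : ℝ) * (γ - 1))))
        * (t + κ) ^ (-((d : ℝ) * (γ - 1))) * J₀)
    (hPm_ub₂ : 1 + 1 / (d : ℝ) < γ → ∀ t ∈ Ico (0:ℝ) T,
      Pm t ≤ ((γ - 1) / (2 * κ)) * (t + κ)⁻¹ * J₀) :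
    (γ ≤ 1 + 1 / (d : ℝ) →
      T ≤ (J₀ / ((2 * κ ^ (2 - (d : ℝ) * (γ - 1)) / (γ - 1)) * Real.exp Slb
          * L ^ ((1 - γ) * (d : ℝ)) * ωd ^ (1 - γ) * m₀ ^ γ))
        ^ (1 / ((d : ℝ) * (γ - 1) * (1 - α)))) ∧
    (1 + 1 / (d : ℝ) < γ → (d : ℝ) * α * (γ - 1) < 1 →
      T ≤ (J₀ / ((2 * κ / (γ - 1)) * Real.exp Slb
          * L ^ ((1 - γ) * (d : ℝ)) * ωd ^ (1 - γ) * m₀ ^ γ))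
        ^ (1 / (1 - (d : ℝ) * α * (γ - 1)))) := by
  obtain ⟨hα0, hα1⟩ := hα
  have hd0 : (0 : ℝ) < d := by exact_mod_cast hd
  have hω : 0 < ωd := by
    rw [hωd]
    exact ENNReal.toReal_pos (Metric.measure_ball_pos volume _ one_pos).ne'
      measure_ball_lt_top.ne
  have hκ0 : 0 < κ := by linarith
  have hγ0 : 0 < γ - 1 := by linarith
  set A : ℝ := Real.exp Slb * L ^ ((1 - γ) * (d : ℝ)) * ωd ^ (1 - γ) * m₀ ^ γ with hA
  have hApos : 0 < A := by positivity
  have hlow : ∀ t ∈ Ico (0 : ℝ) T, A * (t + κ) ^ (-((d : ℝ) * α * (γ - 1))) ≤ Pm t := by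
    intro t ht
    have hx : 0 < t + κ := by linarith [ht.1]
    have hJ := mass_rpow_le_integral_rpow hγ hm₀
      (by positivity : 0 < ωd * L ^ d * (t + κ) ^ ((d : ℝ) * α))
      (hρ0 t ht) (hρmeas t ht) (hρint t ht) (hmass t ht) (hργint t ht) (hsupp t ht)
    refine le_trans (le_of_eq ?_)
      ((mul_le_mul_of_nonneg_left hJ (Real.exp_pos Slb).le).trans (hPm_lb t ht))
    rw [Real.mul_rpow (by positivity) (by positivity), Real.mul_rpow hω.le (by positivity),
      ← Real.rpow_natCast L d, ← Real.rpow_mul hL.le, ← Real.rpow_mul hx.le, hA,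
      mul_comm (d : ℝ) (1 - γ), show (d : ℝ) * α * (1 - γ) = -((d : ℝ) * α * (γ - 1)) by ring]
    ring
  constructor
  · intro hle
    have hD : 0 < 2 * κ ^ (2 - (d : ℝ) * (γ - 1)) / (γ - 1) := by positivity
    have h := time_le_of_power_bounds (b := (d : ℝ) * (γ - 1))
      (p := -((d : ℝ) * α * (γ - 1))) (J := J₀) hApos hD hκ0 hT
      (by
        have : 0 < (d : ℝ) * (γ - 1) * (1 - α) :=
          mul_pos (mul_pos hd0 hγ0) (by linarith)
        linarith)
      (fun t ht => by
        rw [inv_div]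
        exact (hlow t ht).trans (hPm_ub₁ hle t ht))
    convert h using 2
    · rw [hA]
      ring
    · congr 1
      ring
  · intro hlt hdα
    have hD : 0 < 2 * κ / (γ - 1) := by positivity
    have h := time_le_of_power_bounds (b := 1)
      (p := -((d : ℝ) * α * (γ - 1))) (J := J₀) hApos hD hκ0 hT (by linarith)
      (fun t ht => by
        rw [inv_div, Real.rpow_neg_one]
        exact (hlow t ht).trans (hPm_ub₂ hlt t ht))
    convert h using 2
    · rw [hA]
      ring
    · rw [sub_eq_add_neg]
end

section
/- Let d ≥ 1 be an integer, γ > 1, δ ∈ (1, γ], κ ≥ 1, b ≥ 0, c₂ > 0, T > 0. Suppose I_r : [0,T) → [0,∞) is differentiable and satisfies, for all t ∈ [0,T), both I_r′(t) ≤ ((2 − d(γ−1))/(t+κ)) I_r(t) + (δ(γ−1)/(2γ(t+κ)²)) I_r(t) + b and I_r(t) ≥ c₂ (t+κ)². Then T is finite, and T is bounded above by a constant depending only on d, γ, δ, κ, b, c₂ and I_r(0). -/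
open Set

/-!
Write `s = t + κ ≥ 1`, `p = d(γ-1) > 0` and `m = δ(γ-1)/(2γ) ≥ 0`. The rescaled quantity
`G = I · exp(m/s) / s²` is the right one: the factor `exp(m/s)` absorbs the `m/s²` term, and since
`2 - p < 2` the differential inequality gives
`G' ≤ exp(m/s) · (-p I / s³ + b / s²) ≤ -p c₂ / s + b exp(m) / s²`,
where the last step uses `c₂ s² ≤ I`. Hence `G + p c₂ log s + b exp(m) / s` is nonincreasing.
Its value at `t = 0` depends only on the data, while `log s` is unbounded and the other two terms
are nonnegative, so `t` is bounded. Working with the lower bound inside the differential inequality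
avoids integrating it explicitly and splitting cases on the exponent `2 - d(γ-1)`.
-/

/-- The Lyapunov functional `I exp(m/s)/s² + q log s + r/s`, with `s = t + κ`. -/
noncomputable def lyapunov (m q r κ : ℝ) (I : ℝ → ℝ) (t : ℝ) : ℝ :=
  I t * Real.exp (m / (t + κ)) / (t + κ) ^ 2 + q * Real.log (t + κ) + r / (t + κ)

lemma lyapunov_hasDerivWithinAt {m q r κ t I' : ℝ} {I : ℝ → ℝ} {S : Set ℝ} (hs : 0 < t + κ)
    (hI : HasDerivWithinAt I I' S t) :
    HasDerivWithinAt (lyapunov m q r κ I)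
      (Real.exp (m / (t + κ)) * (I' / (t + κ) ^ 2 - 2 * I t / (t + κ) ^ 3 - m * I t / (t + κ) ^ 4)
        + q / (t + κ) - r / (t + κ) ^ 2) S t := by
  have hne : t + κ ≠ 0 := hs.ne'
  have h1 : HasDerivWithinAt (fun x : ℝ => x + κ) 1 S t := (hasDerivWithinAt_id t S).add_const κ
  have h2 := ((hasDerivWithinAt_const t S m).fun_div h1 hne).exp
  have h3 := (hI.fun_mul h2).fun_div (h1.fun_pow 2) (pow_ne_zero 2 hne)
  have h4 := (h1.log hne).const_mul q
  have h5 := (hasDerivWithinAt_const t S r).fun_div h1 hne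
  refine ((h3.fun_add h4).fun_add h5).congr_deriv ?_
  field_simp
  ring

/-- The derivative of `lyapunov` is nonpositive along solutions; here `s = t + κ`, `y = I t` and
`E = exp(m/s)`, with `M = exp m`. -/
lemma lyapunov_deriv_nonpos {s y y' p m b c E M : ℝ} (hs : 0 < s) (hp : 0 ≤ p) (hb : 0 ≤ b)
    (hE : 1 ≤ E) (hEM : E ≤ M) (hy : 0 ≤ y) (hlow : c * s ^ 2 ≤ y)
    (hy' : y' ≤ (2 - p) / s * y + m / s ^ 2 * y + b) :
    E * (y' / s ^ 2 - 2 * y / s ^ 3 - m * y / s ^ 4) + p * c / s - b * M / s ^ 2 ≤ 0 := by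
  have hyE : c * s ^ 2 ≤ E * y := hlow.trans (le_mul_of_one_le_left hy hE)
  calc E * (y' / s ^ 2 - 2 * y / s ^ 3 - m * y / s ^ 4) + p * c / s - b * M / s ^ 2
      ≤ E * (((2 - p) / s * y + m / s ^ 2 * y + b) / s ^ 2 - 2 * y / s ^ 3 - m * y / s ^ 4)
          + p * c / s - b * M / s ^ 2 := by gcongr
    _ = -(p * (E * y - c * s ^ 2) / s ^ 3 + b * (M - E) / s ^ 2) := by
        field_simp
        ring
    _ ≤ 0 := by
        have h1 : 0 ≤ E * y - c * s ^ 2 := sub_nonneg.2 hyE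
        have h2 : 0 ≤ M - E := sub_nonneg.2 hEM
        exact neg_nonpos.2 (by positivity)

/-- Blow-up assertion of Lemma 4.2: there is a bound `B`, depending only on
`d, γ, δ, κ, b, c₂` and the initial value `J₀ = I_r(0)`, such that any
nonnegative differentiable function satisfying the differential inequality
`I_r' ≤ ((2 − d(γ−1))/(t+κ)) I_r + (δ(γ−1)/(2γ(t+κ)²)) I_r + b`
together with the lower bound `I_r(t) ≥ c₂ (t+κ)²` can only exist on a time
interval `[0,T)` with `T ≤ B`. -/
theorem degenerate_ode_blowup (d : ℕ) (hd : 1 ≤ d) (γ δ κ b c₂ J₀ : ℝ)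
    (hγ : 1 < γ) (hδ : δ ∈ Ioc (1:ℝ) γ) (hκ : 1 ≤ κ) (hb : 0 ≤ b) (hc₂ : 0 < c₂) :
    ∃ B : ℝ, ∀ (T : ℝ) (Ir Ir' : ℝ → ℝ), 0 < T →
      Ir 0 = J₀ →
      (∀ t ∈ Ico (0:ℝ) T, 0 ≤ Ir t) →
      (∀ t ∈ Ico (0:ℝ) T, HasDerivWithinAt Ir (Ir' t) (Ico 0 T) t) →
      (∀ t ∈ Ico (0:ℝ) T,
        Ir' t ≤ ((2 - (d : ℝ) * (γ - 1)) / (t + κ)) * Ir t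
          + ((δ * (γ - 1)) / (2 * γ * (t + κ) ^ 2)) * Ir t + b) →
      (∀ t ∈ Ico (0:ℝ) T, c₂ * (t + κ) ^ 2 ≤ Ir t) →
      T ≤ B := by
  obtain ⟨hδ1, -⟩ := hδ
  set p : ℝ := (d : ℝ) * (γ - 1) with hp_def
  set m : ℝ := δ * (γ - 1) / (2 * γ) with hm_def
  have hγ1 : 0 < γ - 1 := sub_pos.2 hγ
  have hp : 0 < p := mul_pos (by exact_mod_cast hd) hγ1
  have hm : 0 ≤ m := by positivity
  have hpc : 0 < p * c₂ := mul_pos hp hc₂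
  -- `lyapunov` at time `0`, where only the value `J₀` of the function matters
  set H : ℝ := lyapunov m (p * c₂) (b * Real.exp m) κ (fun _ => J₀) 0 with hH
  refine ⟨Real.exp (H / (p * c₂)), fun T Ir Ir' hT h0 hnn hder hineq hlow => ?_⟩
  have hanti : AntitoneOn (lyapunov m (p * c₂) (b * Real.exp m) κ Ir) (Ico 0 T) := by
    have hd' := fun t (ht : t ∈ Ico (0 : ℝ) T) =>
      lyapunov_hasDerivWithinAt (m := m) (q := p * c₂) (r := b * Real.exp m) (κ := κ)
        (by linarith [ht.1] : 0 < t + κ) (hder t ht)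
    refine antitoneOn_of_hasDerivWithinAt_nonpos (convex_Ico 0 T)
      (fun t ht => (hd' t ht).continuousWithinAt)
      (fun t ht => (hd' t (interior_subset ht)).mono interior_subset) (fun t ht => ?_)
    have ht := interior_subset ht
    have hs : 1 ≤ t + κ := by linarith [ht.1]
    have hs0 : 0 < t + κ := by linarith
    refine lyapunov_deriv_nonpos hs0 hp.le hb (Real.one_le_exp (by positivity))
      (Real.exp_le_exp.2 (div_le_self hm hs)) (hnn t ht) (hlow t ht) ?_
    have h := hineq t ht
    rwa [← div_div] at h
  by_contra! hlt
  set t := Real.exp (H / (p * c₂)) with ht_def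
  have ht : t ∈ Ico 0 T := ⟨(Real.exp_pos _).le, hlt⟩
  have hle := hanti (left_mem_Ico.2 hT) ht ht.1
  have hH0 : lyapunov m (p * c₂) (b * Real.exp m) κ Ir 0 = H := by simp [hH, lyapunov, h0]
  rw [hH0] at hle
  have hs0 : 0 < t + κ := by linarith [ht.1]
  have hlog : H / (p * c₂) < Real.log (t + κ) := by
    rw [Real.lt_log_iff_exp_lt hs0]
    linarith
  rw [div_lt_iff₀' hpc] at hlog
  have hn := hnn t ht
  have h1 : 0 ≤ Ir t * Real.exp (m / (t + κ)) / (t + κ) ^ 2 := by positivity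
  have h2 : 0 ≤ b * Real.exp m / (t + κ) := by positivity
  unfold lyapunov at hle
  linarith
end
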